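/- arXiv:1908.06131 — 2 statements merged into one kernel-verified Lean document; each statement's English description precedes it below -/
import Mathlib

section
/- Let Q and R be probability measures on a measurable space X, let β ∈ [0,1], let T be a positive integer, and let P = (1−β)^T·Q + (1−(1−β)^T)·R. Then ‖P − Q‖₁ ≤ 2·min(1, T·β). -/
open MeasureTheory
open scoped NNReal

/-!
With `c = 1 - (1 - β) ^ T`, the convex combination `P` satisfies `P - Q = c • (R - Q)`. Homogeneity
and the triangle inequality for the total variation give `‖P - Q‖₁ ≤ c * (Q(X) + R(X))`, and
`c ≤ T * β` is Bernoulli's inequality.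
-/

section SignedMeasure

variable {X : Type*} [MeasurableSpace X]

lemma totalVariation_nnreal_smul (r : ℝ≥0) (s : SignedMeasure X) :
    (r • s).totalVariation = r • s.totalVariation := by
  rw [NNReal.smul_def, SignedMeasure.totalVariation_eq_variation,
    SignedMeasure.totalVariation_eq_variation, VectorMeasure.variation_smul, NNReal.nnnorm_eq]

variable (μ ν : Measure X) [IsFiniteMeasure μ] [IsFiniteMeasure ν]

lemma totalVariation_toSignedMeasure_sub_le :
    (μ.toSignedMeasure - ν.toSignedMeasure).totalVariation ≤ μ + ν := by
  simpa only [SignedMeasure.totalVariation_eq_variation, Measure.variation_toSignedMeasure] using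
    VectorMeasure.variation_sub_le (μ := μ.toSignedMeasure) (ν := ν.toSignedMeasure)

lemma toSignedMeasure_convexComb_sub_left {a b : ℝ≥0} (hab : a + b = 1) :
    (a • μ + b • ν).toSignedMeasure - μ.toSignedMeasure
      = b • (ν.toSignedMeasure - μ.toSignedMeasure) :=
  calc (a • μ + b • ν).toSignedMeasure - μ.toSignedMeasure
      = (a • μ.toSignedMeasure + b • ν.toSignedMeasure) - (a + b) • μ.toSignedMeasure := by
        rw [Measure.toSignedMeasure_add, Measure.toSignedMeasure_smul,
          Measure.toSignedMeasure_smul, hab, one_smul]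
    _ = b • (ν.toSignedMeasure - μ.toSignedMeasure) := by
        rw [add_smul, add_sub_add_left_eq_sub, smul_sub]

lemma totalVariation_convexComb_sub_left_le {a b : ℝ≥0} (hab : a + b = 1) :
    ((a • μ + b • ν).toSignedMeasure - μ.toSignedMeasure).totalVariation ≤ b • (μ + ν) := by
  rw [toSignedMeasure_convexComb_sub_left μ ν hab, totalVariation_nnreal_smul, add_comm μ ν]
  gcongr
  exact totalVariation_toSignedMeasure_sub_le ν μ

end SignedMeasure

lemma one_sub_one_sub_pow_le_min {A : Type*} [Ring A] [LinearOrder A] [IsStrictOrderedRing A]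
    {x : A} (hx : x ≤ 1) (n : ℕ) : 1 - (1 - x) ^ n ≤ min 1 (n * x) := by
  have one_sub_nonneg : 0 ≤ 1 - x := sub_nonneg.2 hx
  have bernoulli : 1 - n * x ≤ (1 - x) ^ n := by
    simpa only [sub_sub_cancel_left, mul_neg, ← sub_eq_add_neg] using
      one_add_mul_sub_le_pow (neg_one_lt_zero.le.trans one_sub_nonneg) n
  exact le_min (sub_le_self 1 (pow_nonneg one_sub_nonneg n)) (sub_le_comm.1 bernoulli)

theorem tv_mixed_policy_le_two_min_general
    {X : Type*} [MeasurableSpace X]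
    (Q R : Measure X) [IsFiniteMeasure Q] [IsFiniteMeasure R]
    (β : ℝ) (hβ : β ∈ Set.Icc (0 : ℝ) 1) (T : ℕ)
    (P : Measure X) [IsFiniteMeasure P]
    (hP : P = ENNReal.ofReal ((1 - β) ^ T) • Q
        + ENNReal.ofReal (1 - (1 - β) ^ T) • R) :
    ((P.toSignedMeasure - Q.toSignedMeasure).totalVariation Set.univ).toReal
        ≤ (Q.real Set.univ + R.real Set.univ) * min 1 ((T : ℝ) * β) := by
  set a := (1 - β) ^ T
  have ha_nonneg : 0 ≤ a := pow_nonneg (sub_nonneg.2 hβ.2) T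
  have ha_le_one : a ≤ 1 := pow_le_one₀ (sub_nonneg.2 hβ.2) (sub_le_self 1 hβ.1)
  have h_weights : a.toNNReal + (1 - a).toNNReal = 1 := by
    rw [← Real.toNNReal_add ha_nonneg (sub_nonneg.2 ha_le_one), add_sub_cancel, Real.toNNReal_one]
  obtain rfl : P = a.toNNReal • Q + (1 - a).toNNReal • R := hP
  calc _ ≤ ((1 - a).toNNReal • (Q + R)).real Set.univ :=
        ENNReal.toReal_mono (measure_ne_top _ _)
          (totalVariation_convexComb_sub_left_le Q R h_weights _)
    _ = (Q.real Set.univ + R.real Set.univ) * (1 - a) := by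
        rw [measureReal_nnreal_smul_apply, measureReal_add_apply,
          Real.coe_toNNReal _ (sub_nonneg.2 ha_le_one), mul_comm]
    _ ≤ (Q.real Set.univ + R.real Set.univ) * min 1 ((T : ℝ) * β) := by
        gcongr
        exact one_sub_one_sub_pow_le_min hβ.2 T

/-- If `Q` and `R` are probability measures, `β ∈ [0,1]`, `T` is a positive integer, and
`P = (1-β)^T • Q + (1 - (1-β)^T) • R`, then `‖P - Q‖₁ ≤ 2 * min 1 (T * β)`, where `‖·‖₁`
denotes the total variation of the corresponding signed measure evaluated on the whole space. -/
theorem tv_mixed_policy_le_two_min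
    {X : Type*} [MeasurableSpace X]
    (Q R : Measure X) [IsProbabilityMeasure Q] [IsProbabilityMeasure R]
    (β : ℝ) (hβ : β ∈ Set.Icc (0 : ℝ) 1) (T : ℕ) (hT : 0 < T)
    (P : Measure X) [IsFiniteMeasure P]
    (hP : P = ENNReal.ofReal ((1 - β) ^ T) • Q
        + ENNReal.ofReal (1 - (1 - β) ^ T) • R) :
    ((P.toSignedMeasure - Q.toSignedMeasure).totalVariation Set.univ).toReal
        ≤ 2 * min 1 ((T : ℝ) * β) := by
  simpa only [probReal_univ, one_add_one_eq_two] using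
    tv_mixed_policy_le_two_min_general Q R β hβ T P hP
end

section
/- Let Q and R be probability measures on a measurable space X, let β ∈ [0,1], let T be a positive integer, let P = (1−β)^T·Q + (1−(1−β)^T)·R, and let f : X → ℝ be a measurable function with 0 ≤ f(x) ≤ l_max for all x ∈ X. Then E_{x∼Q}[f(x)] ≤ E_{x∼P}[f(x)] + l_max·min(1, T·β). -/
/-!
Put `a = (1 - β) ^ T`. Then `∫ f ∂Q - ∫ f ∂P = (1 - a) * (∫ f ∂Q - ∫ f ∂R) ≤ (1 - a) * lmax`,
and `1 - a ≤ T * β` by Bernoulli's inequality.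
-/

open MeasureTheory

section Bernoulli

variable {α : Type*} [Ring α] [LinearOrder α] [IsStrictOrderedRing α] {b : α}

theorem one_sub_one_sub_pow_le_mul (hb : b ≤ 2) (n : ℕ) : 1 - (1 - b) ^ n ≤ n * b := by
  have bernoulli : 1 + n * -b ≤ (1 + -b) ^ n := one_add_mul_le_pow (neg_le_neg hb) n
  rwa [mul_neg, ← sub_eq_add_neg, ← sub_eq_add_neg, sub_le_comm] at bernoulli

theorem one_sub_one_sub_pow_le_min_s4 (hb : b ≤ 1) (n : ℕ) :
    1 - (1 - b) ^ n ≤ min 1 (n * b) :=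
  le_min (sub_le_self 1 (pow_nonneg (sub_nonneg.2 hb) n))
    (one_sub_one_sub_pow_le_mul (hb.trans one_le_two) n)

end Bernoulli

section Mixture

variable {X : Type*} [MeasurableSpace X] {μ ν : Measure X}

theorem integral_ofReal_smul_add_ofReal_smul_measure {E : Type*} [NormedAddCommGroup E]
    [NormedSpace ℝ E] {f : X → E} (hfμ : Integrable f μ) (hfν : Integrable f ν)
    {a b : ℝ} (ha : 0 ≤ a) (hb : 0 ≤ b) :
    ∫ x, f x ∂(ENNReal.ofReal a • μ + ENNReal.ofReal b • ν) =
      a • ∫ x, f x ∂μ + b • ∫ x, f x ∂ν := by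
  rw [integral_add_measure (hfμ.smul_measure ENNReal.ofReal_ne_top)
      (hfν.smul_measure ENNReal.ofReal_ne_top),
    integral_smul_measure, integral_smul_measure,
    ENNReal.toReal_ofReal ha, ENNReal.toReal_ofReal hb]

theorem integral_le_integral_mixture_add {f : X → ℝ} (hfμ : Integrable f μ)
    (hfν : Integrable f ν) {a c : ℝ} (ha : a ∈ Set.Icc 0 1) (hμ : ∫ x, f x ∂μ ≤ c)
    (hν : 0 ≤ ∫ x, f x ∂ν) :
    ∫ x, f x ∂μ ≤
      ∫ x, f x ∂(ENNReal.ofReal a • μ + ENNReal.ofReal (1 - a) • ν) + (1 - a) * c := by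
  have ha' : 0 ≤ 1 - a := sub_nonneg.2 ha.2
  rw [integral_ofReal_smul_add_ofReal_smul_measure hfμ hfν ha.1 ha', smul_eq_mul, smul_eq_mul]
  calc ∫ x, f x ∂μ
      = a * ∫ x, f x ∂μ + (1 - a) * 0 + (1 - a) * ∫ x, f x ∂μ := by ring
    _ ≤ a * ∫ x, f x ∂μ + (1 - a) * ∫ x, f x ∂ν + (1 - a) * c := by gcongr

theorem expectation_le_mixed_expectation_add_general [IsProbabilityMeasure μ] {f : X → ℝ}
    (hfμ : Integrable f μ) (hfν : Integrable f ν) {β : ℝ} (hβ : β ∈ Set.Icc 0 1) (T : ℕ)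
    {lmax : ℝ} (hlmax : 0 ≤ lmax) (hf_le : ∀ᵐ x ∂μ, f x ≤ lmax) (hf_nonneg : 0 ≤ᵐ[ν] f) :
    ∫ x, f x ∂μ ≤
      ∫ x, f x ∂(ENNReal.ofReal ((1 - β) ^ T) • μ + ENNReal.ofReal (1 - (1 - β) ^ T) • ν)
        + lmax * min 1 (T * β) := by
  have weight_mem : (1 - β) ^ T ∈ Set.Icc (0 : ℝ) 1 :=
    ⟨pow_nonneg (sub_nonneg.2 hβ.2) T, pow_le_one₀ (sub_nonneg.2 hβ.2) (sub_le_self 1 hβ.1)⟩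
  have integral_le : ∫ x, f x ∂μ ≤ lmax := by
    simpa using integral_mono_ae hfμ (integrable_const lmax) hf_le
  have penalty_le : (1 - (1 - β) ^ T) * lmax ≤ lmax * min 1 (T * β) := by
    rw [mul_comm]
    exact mul_le_mul_of_nonneg_left (one_sub_one_sub_pow_le_min_s4 hβ.2 T) hlmax
  exact (integral_le_integral_mixture_add hfμ hfν weight_mem integral_le
    (integral_nonneg_of_ae hf_nonneg)).trans (by gcongr)

end Mixture

/-- If `Q` and `R` are probability measures, `β ∈ [0,1]`, `T` is a positive integer,
`P = (1-β)^T • Q + (1 - (1-β)^T) • R`, and `f` is a measurable function with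
`0 ≤ f x ≤ l_max` for all `x`, then `E_{Q}[f] ≤ E_{P}[f] + l_max * min 1 (T * β)`. -/
theorem expectation_le_mixed_expectation_add
    {X : Type*} [MeasurableSpace X]
    (Q R : Measure X) [IsProbabilityMeasure Q] [IsProbabilityMeasure R]
    (β : ℝ) (hβ : β ∈ Set.Icc (0 : ℝ) 1) (T : ℕ) (hT : 0 < T)
    (P : Measure X) [IsFiniteMeasure P]
    (hP : P = ENNReal.ofReal ((1 - β) ^ T) • Q
        + ENNReal.ofReal (1 - (1 - β) ^ T) • R)
    (f : X → ℝ) (hf : Measurable f) (lmax : ℝ)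
    (hfb : ∀ x, 0 ≤ f x ∧ f x ≤ lmax) :
    ∫ x, f x ∂Q ≤ (∫ x, f x ∂P) + lmax * min 1 ((T : ℝ) * β) := by
  have integrable (μ : Measure X) [IsFiniteMeasure μ] : Integrable f μ :=
    .of_mem_Icc 0 lmax hf.aemeasurable (.of_forall hfb)
  obtain ⟨x⟩ := nonempty_of_isProbabilityMeasure Q
  rw [hP]
  exact expectation_le_mixed_expectation_add_general (integrable Q) (integrable R) hβ T
    ((hfb x).1.trans (hfb x).2) (.of_forall fun y => (hfb y).2) (.of_forall fun y => (hfb y).1)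
end
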